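/- arXiv:1809.03197 — 3 statements merged into one kernel-verified Lean document; each statement's English description precedes it below -/
import Mathlib

section
/- Equality of corank-one principal minors: Let n ≥ 1 and let M be an n × n real matrix all of whose row sums are zero and all of whose column sums are zero. Then for any two indices i, j ∈ Fin n, the determinant of the matrix obtained from M by deleting row i and column i equals the determinant of the matrix obtained from M by deleting row j and column j. -/
/-!
Identify each index set `{x // x ≠ i}` with `Fin m`, where `n = m + 1`, via `Fin.succAbove i`.
Since the columns sum to zero, changing the deleted row from `i` to `j` multiplies the minor by
`(-1) ^ (i - j)`; since the rows sum to zero, changing the deleted column from `i` to `j` does the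
same. The two signs cancel.
-/

/-- The principal minor indexed by the subtype `{x // x ≠ i}`, transported to `Fin m`. -/
theorem det_submatrix_ne_eq_succAbove {m : ℕ} (M : Matrix (Fin (m + 1)) (Fin (m + 1)) ℝ)
    (i : Fin (m + 1)) :
    Matrix.det (M.submatrix
        (fun x : {x : Fin (m + 1) // x ≠ i} => (x : Fin (m + 1)))
        (fun x : {x : Fin (m + 1) // x ≠ i} => (x : Fin (m + 1))))
      = Matrix.det (M.submatrix i.succAbove i.succAbove) := by
  rw [← Matrix.det_submatrix_equiv_self (finSuccAboveEquiv i), Matrix.submatrix_submatrix]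
  rfl

/-- **Equality of corank-one principal minors** of a matrix with vanishing
row sums and column sums. -/
theorem principal_minors_eq_of_row_col_sums_zero
    (n : ℕ) (hn : 0 < n) (M : Matrix (Fin n) (Fin n) ℝ)
    (hrow : ∀ i : Fin n, ∑ k, M i k = 0)
    (hcol : ∀ j : Fin n, ∑ k, M k j = 0)
    (i j : Fin n) :
    Matrix.det (M.submatrix
        (fun x : {x : Fin n // x ≠ i} => (x : Fin n))
        (fun x : {x : Fin n // x ≠ i} => (x : Fin n)))
      = Matrix.det (M.submatrix
        (fun x : {x : Fin n // x ≠ j} => (x : Fin n))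
        (fun x : {x : Fin n // x ≠ j} => (x : Fin n))) := by
  obtain ⟨m, rfl⟩ := Nat.exists_eq_add_one.mpr hn
  rw [det_submatrix_ne_eq_succAbove, det_submatrix_ne_eq_succAbove]
  have hrows : (M.submatrix i.succAbove i.succAbove).det =
      Int.negOnePow (i - j) • (M.submatrix j.succAbove i.succAbove).det :=
    Matrix.submatrix_succAbove_det_eq_negOnePow_submatrix_succAbove_det
      (M.submatrix id i.succAbove) (by ext k; exact (Finset.sum_apply _ _ _).trans (hcol _)) i j
  have hcols : (M.submatrix j.succAbove i.succAbove).det =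
      Int.negOnePow (i - j) • (M.submatrix j.succAbove j.succAbove).det :=
    Matrix.submatrix_succAbove_det_eq_negOnePow_submatrix_succAbove_det'
      (M.submatrix j.succAbove id) (fun k => hrow _) i j
  rw [hrows, hcols, smul_smul, Int.units_mul_self, one_smul]
end

section
/- Spine-plus-forest construction of a tree: Let V be a finite type, let w₁, …, w_k (k ≥ 1) be pairwise distinct vertices of V, and let F be a simple graph on V that is acyclic and such that every connected component of F contains exactly one of the vertices w₁, …, w_k. Let T be the graph obtained from F by adding the edges {w_i, w_{i+1}} for 1 ≤ i < k. Then T is a tree (connected and acyclic), and the unique path in T from w₁ to w_k visits exactly the vertices w₁, w₂, …, w_k, in that order. -/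
/-!
Let `r v` be the index of the root in the `F`-component of `v`, so that `r` is constant along edges
of `F` and `r (w i) = i`. The spine edges are added one at a time. After the edges among
`w 0, …, w m` are present, `max (r v) m` is still constant on connected components. It takes the
values `m` and `m + 1` at `w m` and `w (m + 1)`, so the next spine edge joins two different
components and creates no cycle. The graph is connected because every vertex reaches its root
inside `F` and every root reaches `w 0` along the spine. Finally, the spine is itself a path
(`w` is injective), so uniqueness of paths in an acyclic graph identifies it with any given path.
-/

/-- A vertex sequence with consecutive terms adjacent is the support of a walk. -/
lemma exists_walk_support_eq_ofFn {V : Type*} (G : SimpleGraph V) (m : ℕ) (w : Fin (m + 1) → V)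
    (h : ∀ i : Fin m, G.Adj (w i.castSucc) (w i.succ)) :
    ∃ p : G.Walk (w 0) (w (Fin.last m)), p.support = List.ofFn w := by
  induction m with
  | zero => exact ⟨SimpleGraph.Walk.nil, by simp⟩
  | succ m ih =>
    obtain ⟨p, hp⟩ := ih (fun i => w i.succ) (fun i => h i.succ)
    have h0 : G.Adj (w 0) (w (Fin.succ 0)) := h 0
    refine ⟨SimpleGraph.Walk.cons h0 p, ?_⟩
    rw [List.ofFn_succ, ← hp]
    rfl

/-- The forest `F` together with the spine edges among `w 0, …, w m`. -/
def partialSpine {V : Type*} {k : ℕ} (F : SimpleGraph V) (w : Fin k → V) (m : ℕ) :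
    SimpleGraph V :=
  F ⊔ SimpleGraph.fromEdgeSet
    {e : Sym2 V | ∃ i j : Fin k, (j : ℕ) = (i : ℕ) + 1 ∧ (j : ℕ) ≤ m ∧ e = s(w i, w j)}

/-- With the spine edges among `w 0, …, w m` present, the components rooted there are merged and
no others, so `max (r v) m` is an invariant of the component of `v`. -/
lemma partialSpine_invariant {V : Type*} {k : ℕ} (F : SimpleGraph V) (w : Fin k → V) (r : V → ℕ)
    (hrF : ∀ u v, F.Adj u v → r u = r v) (hrw : ∀ i, r (w i) = i) (m : ℕ) {u v : V}
    (h : (partialSpine F w m).Reachable u v) : max (r u) m = max (r v) m := by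
  obtain ⟨p⟩ := h
  induction p with
  | nil => rfl
  | cons hadj p ih =>
    rw [← ih]
    rw [partialSpine, SimpleGraph.sup_adj, SimpleGraph.fromEdgeSet_adj] at hadj
    rcases hadj with h | ⟨⟨i, j, hij, hjm, he⟩, -⟩
    · rw [hrF _ _ h]
    · have hi := hrw i
      have hj := hrw j
      rcases Sym2.eq_iff.1 he with ⟨rfl, rfl⟩ | ⟨rfl, rfl⟩ <;> omega

lemma partialSpine_isAcyclic {V : Type*} {k : ℕ} (F : SimpleGraph V) (hF : F.IsAcyclic)
    (w : Fin k → V) (r : V → ℕ)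
    (hrF : ∀ u v, F.Adj u v → r u = r v) (hrw : ∀ i, r (w i) = i) (m : ℕ) :
    (partialSpine F w m).IsAcyclic := by
  induction m with
  | zero =>
    refine hF.anti ?_
    intro u v h
    rw [partialSpine, SimpleGraph.sup_adj, SimpleGraph.fromEdgeSet_adj] at h
    rcases h with h | ⟨⟨i, j, hij, hj, -⟩, -⟩
    · exact h
    · omega
  | succ m ih =>
    by_cases hm : m + 1 < k
    · have hnr : ¬ (partialSpine F w m).Reachable (w ⟨m, by omega⟩) (w ⟨m + 1, hm⟩) := by
        intro h
        have := partialSpine_invariant F w r hrF hrw m h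
        rw [hrw, hrw] at this
        simp at this
      refine (ih.sup_edge_of_not_reachable hnr).anti ?_
      intro u v h
      have hne := h.ne
      simp only [partialSpine, SimpleGraph.sup_adj, SimpleGraph.fromEdgeSet_adj,
        SimpleGraph.edge, Set.mem_ofPred_eq, Set.mem_singleton_iff] at h ⊢
      rcases h with h | ⟨⟨i, j, hij, hj, he⟩, -⟩
      · exact Or.inl (Or.inl h)
      · rcases Nat.lt_or_ge m j with hlt | hle
        · have hi : i = ⟨m, Nat.lt_of_succ_lt hm⟩ := Fin.ext (by simp; omega)
          have hj : j = ⟨m + 1, hm⟩ := Fin.ext (by simp; omega)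
          rw [hj, hi] at he
          exact Or.inr ⟨he, hne⟩
        · exact Or.inl (Or.inr ⟨⟨i, j, hij, hle, he⟩, hne⟩)
    · refine ih.anti ?_
      intro u v h
      simp only [partialSpine, SimpleGraph.sup_adj, SimpleGraph.fromEdgeSet_adj,
        Set.mem_ofPred_eq] at h ⊢
      rcases h with h | ⟨⟨i, j, hij, hj, he⟩, hne⟩
      · exact Or.inl h
      · exact Or.inr ⟨⟨i, j, hij, by omega, he⟩, hne⟩

/-- **Spine-plus-forest construction of a tree**: adding the spine edges
`{w i, w (i+1)}` to a forest rooted at the pairwise distinct vertices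
`w 0, …, w (k-1)` produces a tree, and the unique path in that tree from
`w 0` to `w (k-1)` visits exactly the vertices `w 0, …, w (k-1)` in order. -/
theorem spine_plus_forest_is_tree
    (V : Type*) [Fintype V] [DecidableEq V]
    (k : ℕ) (hk : 0 < k) (w : Fin k → V) (hw : Function.Injective w)
    (F : SimpleGraph V) (hF : F.IsAcyclic)
    (hroot : ∀ c : F.ConnectedComponent,
      ∃! i : Fin k, F.connectedComponentMk (w i) = c) :
    (F ⊔ SimpleGraph.fromEdgeSet
        {e : Sym2 V | ∃ i j : Fin k, (j : ℕ) = (i : ℕ) + 1 ∧ e = s(w i, w j)}).IsTree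
    ∧ ∀ p : (F ⊔ SimpleGraph.fromEdgeSet
        {e : Sym2 V | ∃ i j : Fin k, (j : ℕ) = (i : ℕ) + 1 ∧ e = s(w i, w j)}).Walk
          (w ⟨0, hk⟩) (w ⟨k - 1, Nat.sub_lt hk Nat.one_pos⟩),
        p.IsPath → p.support = List.ofFn w := by
  choose ρ hρ hρu using hroot
  have hrF : ∀ u v, F.Adj u v →
      (ρ (F.connectedComponentMk u) : ℕ) = ρ (F.connectedComponentMk v) := by
    intro u v h
    rw [SimpleGraph.ConnectedComponent.sound h.reachable]
  have hrw : ∀ i, (ρ (F.connectedComponentMk (w i)) : ℕ) = i := fun i =>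
    congrArg Fin.val (hρu _ i rfl).symm
  set T := F ⊔ SimpleGraph.fromEdgeSet
    {e : Sym2 V | ∃ i j : Fin k, (j : ℕ) = (i : ℕ) + 1 ∧ e = s(w i, w j)} with hT
  have hacyc : T.IsAcyclic := by
    refine (partialSpine_isAcyclic F hF w
      (fun v => (ρ (F.connectedComponentMk v) : ℕ)) hrF hrw k).anti ?_
    refine sup_le_sup le_rfl (SimpleGraph.fromEdgeSet_mono ?_)
    rintro e ⟨i, j, hij, he⟩
    exact ⟨i, j, hij, j.2.le, he⟩
  have hspine : ∀ i j : Fin k, (j : ℕ) = (i : ℕ) + 1 → T.Adj (w i) (w j) := by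
    intro i j hij
    rw [hT, SimpleGraph.sup_adj, SimpleGraph.fromEdgeSet_adj]
    refine Or.inr ⟨⟨i, j, hij, rfl⟩, fun h => ?_⟩
    rw [hw h] at hij
    omega
  have hreach : ∀ (n : ℕ) (hn : n < k), T.Reachable (w ⟨n, hn⟩) (w ⟨0, hk⟩) := by
    intro n
    induction n with
    | zero => exact fun _ => SimpleGraph.Reachable.refl _
    | succ n ih =>
      exact fun hn => (hspine ⟨n, by omega⟩ ⟨n + 1, hn⟩ rfl).symm.reachable.trans (ih (by omega))
  have hroot0 : ∀ v, T.Reachable v (w ⟨0, hk⟩) := by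
    intro v
    have h := SimpleGraph.ConnectedComponent.exact (hρ (F.connectedComponentMk v))
    exact (h.symm.mono le_sup_left).trans (hreach _ (ρ (F.connectedComponentMk v)).2)
  have : Nonempty V := ⟨w ⟨0, hk⟩⟩
  refine ⟨⟨⟨fun u v => (hroot0 u).trans (hroot0 v).symm⟩, hacyc⟩, ?_⟩
  clear_value T
  obtain ⟨m, rfl⟩ : ∃ m, k = m + 1 := ⟨k - 1, by omega⟩
  intro p hp
  obtain ⟨q, hq⟩ := exists_walk_support_eq_ofFn T m w (fun i => hspine _ _ (by simp))
  have hqp : q.IsPath := by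
    rw [SimpleGraph.Walk.isPath_def, hq]
    exact List.nodup_ofFn.2 hw
  have hpq : (⟨p, hp⟩ : T.Path _ _) = ⟨q, hqp⟩ := (hacyc.subsingleton_path _ _).elim _ _
  rw [← hq]
  exact congrArg (fun x : T.Path _ _ => x.1.support) hpq
end

section
/- Bijection between marked trees and spine–forest pairs: Let V be a finite nonempty type. There is a bijection between (a) pairs (T, (u,v)) where T is a tree (connected acyclic simple graph) on V and u, v ∈ V, and (b) pairs (ω, F) where ω = (w₁, …, w_k) is a nonempty list of pairwise distinct vertices of V and F is a simple graph on V that is acyclic and such that every connected component of F contains exactly one vertex appearing in ω; the bijection sends (T, (u,v)) to the pair consisting of the ordered vertex sequence of the unique path in T from u to v, together with the graph obtained from T by deleting the edges of that path, and its inverse sends (ω, F) to the graph obtained from F by adding the edges {w_i, w_{i+1}} for 1 ≤ i < k, marked with the pair (w₁, w_k). -/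
/-!
Both directions reduce to one equivalence, `forest_iff_tree`: for a nonempty duplicate-free list
`ω` and a graph `F`, the graph `F` is a forest having exactly one vertex of `ω` in each component
if and only if adding the edges of the spine `ω` to `F` yields a tree and none of these edges was
already in `F`.

The equivalence is proved by induction on `ω`, for all `F` simultaneously. For `ω = [a]` it says
that an acyclic graph all of whose vertices are joined to `a` is a tree. For `ω = a :: b :: l`, move
the edge `ab` from the spine into the forest: `F` is a forest rooted at `a :: b :: l` if and only if
`F + ab` is a forest rooted at `b :: l` and `ab` is not an edge of `F`. This rests on the description
of reachability in `F + ab` (`reachable_sup_edge`).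

Given a marked tree, cutting along its path and adding the path edges back restores the tree, so
the cut graph is a rooted forest by the equivalence, and the forward map is injective. Given a
rooted forest, the spine is a path of the glued tree whose removal gives the forest back, so the map
is surjective and its inverse is gluing.
-/

namespace SpineForest

open SimpleGraph

variable {V : Type*}

/-- The set of unordered pairs of consecutive entries of the list `ω`. -/
def spineEdges (ω : List V) : Set (Sym2 V) :=
  {e' : Sym2 V | e' ∈ (ω.zip ω.tail).map (fun q => s(q.1, q.2))}

/-- Every component of `F` contains exactly one vertex of `ω`, expressed through reachability:
each vertex is joined to some vertex of `ω`, and distinct vertices of `ω` are not joined. -/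
def Rooted (F : SimpleGraph V) (ω : List V) : Prop :=
  (∀ v, ∃ w ∈ ω, F.Reachable v w) ∧ ∀ x ∈ ω, ∀ y ∈ ω, F.Reachable x y → x = y

lemma rooted_iff (F : SimpleGraph V) (ω : List V) :
    Rooted F ω ↔ ∀ c : F.ConnectedComponent,
      ∃! v : V, v ∈ ω ∧ F.connectedComponentMk v = c := by
  constructor
  · rintro ⟨h1, h2⟩ c
    induction c using ConnectedComponent.ind with
    | h v =>
      obtain ⟨w, hw, hvw⟩ := h1 v
      refine ⟨w, ⟨hw, ConnectedComponent.eq.2 hvw.symm⟩, ?_⟩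
      rintro y ⟨hy, hyv⟩
      exact h2 y hy w hw ((ConnectedComponent.eq.1 hyv).trans hvw)
  · intro h
    refine ⟨fun v => ?_, fun x hx y hy hxy => ?_⟩
    · obtain ⟨w, ⟨hw, hwv⟩, -⟩ := h (F.connectedComponentMk v)
      exact ⟨w, hw, (ConnectedComponent.eq.1 hwv).symm⟩
    · exact (h (F.connectedComponentMk y)).unique ⟨hx, ConnectedComponent.eq.2 hxy⟩ ⟨hy, rfl⟩

lemma spineEdges_singleton (a : V) : spineEdges [a] = ∅ := by
  simp [spineEdges]

lemma spineEdges_cons_cons (a b : V) (l : List V) :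
    spineEdges (a :: b :: l) = insert s(a, b) (spineEdges (b :: l)) := by
  ext e
  simp [spineEdges]

lemma mem_of_mem_spineEdges {ω : List V} {x y : V} (h : s(x, y) ∈ spineEdges ω) : x ∈ ω := by
  simp only [spineEdges, Set.mem_ofPred_eq, List.mem_map, Prod.exists] at h
  obtain ⟨p, q, hpq, he⟩ := h
  have h1 := List.of_mem_zip hpq
  have h2 := List.mem_of_mem_tail h1.2
  rcases Sym2.eq_iff.1 he with ⟨rfl, rfl⟩ | ⟨rfl, rfl⟩
  exacts [h1.1, h2]

lemma spineEdges_support {G : SimpleGraph V} {u v : V} (p : G.Walk u v) :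
    spineEdges p.support = {e | e ∈ p.edges} := by
  ext e
  simp [spineEdges, Walk.edges_eq_zipWith_support, List.zip, List.map_zipWith]

/-- Vertices joined in `F + ab` are joined in `F`, or one is joined to `a` and the other to `b`. -/
lemma reachable_sup_edge (F : SimpleGraph V) {a b : V} (hab : a ≠ b) (x y : V) :
    (F ⊔ edge a b).Reachable x y ↔ F.Reachable x y ∨
      (F.Reachable x a ∧ F.Reachable b y) ∨ (F.Reachable x b ∧ F.Reachable a y) := by
  have hle : ∀ {x y}, F.Reachable x y → (F ⊔ edge a b).Reachable x y :=
    fun h => h.mono le_sup_left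
  have hr : (F ⊔ edge a b).Reachable a b :=
    Adj.reachable (Or.inr ((edge_adj ..).2 ⟨Or.inl ⟨rfl, rfl⟩, hab⟩))
  constructor
  · rintro ⟨p⟩
    induction p with
    | nil => exact Or.inl (Reachable.refl _)
    | @cons x z y h p ih =>
      rcases h with h | h
      · have h := h.reachable
        rcases ih with ih | ⟨ih, ih'⟩ | ⟨ih, ih'⟩
        · exact Or.inl (h.trans ih)
        · exact Or.inr (Or.inl ⟨h.trans ih, ih'⟩)
        · exact Or.inr (Or.inr ⟨h.trans ih, ih'⟩)
      · rcases ((edge_adj ..).1 h).1 with ⟨rfl, rfl⟩ | ⟨rfl, rfl⟩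
        · rcases ih with ih | ⟨ih, ih'⟩ | ⟨ih, ih'⟩
          · exact Or.inr (Or.inl ⟨Reachable.refl _, ih⟩)
          · exact Or.inr (Or.inl ⟨Reachable.refl _, ih'⟩)
          · exact Or.inl ih'
        · rcases ih with ih | ⟨ih, ih'⟩ | ⟨ih, ih'⟩
          · exact Or.inr (Or.inr ⟨Reachable.refl _, ih⟩)
          · exact Or.inl ih'
          · exact Or.inr (Or.inr ⟨Reachable.refl _, ih'⟩)
  · rintro (h | ⟨h, h'⟩ | ⟨h, h'⟩)
    · exact hle h
    · exact ((hle h).trans hr).trans (hle h')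
    · exact ((hle h).trans hr.symm).trans (hle h')

/-- When `a` and `b` lie in different components of `F`, merging these components by the edge `ab`
amounts to dropping the root `a`. -/
lemma rooted_sup_edge (F : SimpleGraph V) {a b : V} {l : List V} (ha : a ∉ b :: l)
    (hR : ¬ F.Reachable a b) :
    Rooted F (a :: b :: l) ↔ Rooted (F ⊔ edge a b) (b :: l) := by
  have hab : a ≠ b := fun h => ha (by simp [h])
  have key := reachable_sup_edge F hab
  constructor
  · rintro ⟨h1, h2⟩
    refine ⟨fun v => ?_, fun x hx y hy hxy => ?_⟩
    · obtain ⟨w, hw, hvw⟩ := h1 v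
      rcases List.mem_cons.1 hw with rfl | hw
      · exact ⟨b, by simp, (key _ _).2 (Or.inr (Or.inl ⟨hvw, Reachable.refl _⟩))⟩
      · exact ⟨w, hw, (key _ _).2 (Or.inl hvw)⟩
    · have hx' := List.mem_cons_of_mem a hx
      have hy' := List.mem_cons_of_mem a hy
      rcases (key x y).1 hxy with h | ⟨h, -⟩ | ⟨-, h⟩
      · exact h2 x hx' y hy' h
      · exact absurd (h2 x hx' a (by simp) h ▸ hx) ha
      · exact absurd (h2 a (by simp) y hy' h ▸ hy) ha
  · rintro ⟨h1, h2⟩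
    -- A vertex of the tail joined to `a` in `F` is joined to `b` in `F + ab`, hence equals `b`.
    have hav : ∀ y ∈ b :: l, ¬ F.Reachable a y := fun y hy h => by
      have := h2 b (by simp) y hy ((key _ _).2 (Or.inr (Or.inr ⟨Reachable.refl _, h⟩)))
      exact hR (this ▸ h)
    refine ⟨fun v => ?_, fun x hx y hy hxy => ?_⟩
    · obtain ⟨w, hw, hvw⟩ := h1 v
      rcases (key v w).1 hvw with h | ⟨h, -⟩ | ⟨h, -⟩
      · exact ⟨w, List.mem_cons_of_mem _ hw, h⟩
      · exact ⟨a, by simp, h⟩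
      · exact ⟨b, by simp, h⟩
    · rcases List.mem_cons.1 hx with rfl | hx1 <;> rcases List.mem_cons.1 hy with rfl | hy1
      · rfl
      · exact absurd hxy (hav y hy1)
      · exact absurd hxy.symm (hav x hx1)
      · exact h2 x hx1 y hy1 ((key _ _).2 (Or.inl hxy))

/-- `F` is a forest rooted at `ω` if and only if gluing the spine `ω` to `F` creates only new edges
and produces a tree. -/
theorem forest_iff_tree (ω : List V) (hne : ω ≠ []) (hnd : ω.Nodup) (F : SimpleGraph V) :
    (F.IsAcyclic ∧ Rooted F ω) ↔
      (F ⊔ fromEdgeSet (spineEdges ω)).IsTree ∧ ∀ e ∈ spineEdges ω, e ∉ F.edgeSet := by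
  induction ω generalizing F with
  | nil => exact absurd rfl hne
  | cons a l ih =>
    cases l with
    | nil =>
      simp only [spineEdges_singleton, fromEdgeSet_empty, sup_bot_eq, Set.mem_empty_iff_false,
        false_imp_iff, implies_true, and_true]
      constructor
      · rintro ⟨hF, h, -⟩
        have h' : ∀ v, F.Reachable v a := fun v => by simpa using h v
        have : Nonempty V := ⟨a⟩
        exact ⟨⟨fun x y => (h' x).trans (h' y).symm⟩, hF⟩
      · intro h
        exact ⟨h.isAcyclic, fun v => ⟨a, by simp, h.connected.preconnected v a⟩, by simp⟩
    | cons b l =>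
      have ha : a ∉ b :: l := (List.nodup_cons.1 hnd).1
      have hab : a ≠ b := fun h => ha (by simp [h])
      have hsup : F ⊔ fromEdgeSet (spineEdges (a :: b :: l)) =
          (F ⊔ edge a b) ⊔ fromEdgeSet (spineEdges (b :: l)) := by
        rw [spineEdges_cons_cons, Set.insert_eq, fromEdgeSet_union, sup_assoc]; rfl
      have hdisj : (∀ e ∈ spineEdges (a :: b :: l), e ∉ F.edgeSet) ↔
          (∀ e ∈ spineEdges (b :: l), e ∉ (F ⊔ edge a b).edgeSet) ∧ ¬ F.Adj a b := by
        have hnot : s(a, b) ∉ spineEdges (b :: l) := fun h => ha (mem_of_mem_spineEdges h)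
        rw [spineEdges_cons_cons, edgeSet_sup, edgeSet_edge_of_ne hab]
        simp only [Set.mem_insert_iff, forall_eq_or_imp, Set.mem_union, Set.mem_singleton_iff,
          mem_edgeSet, not_or]
        constructor
        · rintro ⟨h1, h2⟩
          exact ⟨fun e he => ⟨h2 e he, fun h => hnot (h ▸ he)⟩, h1⟩
        · rintro ⟨h1, h2⟩
          exact ⟨h2, fun e he => (h1 e he).1⟩
      rw [hsup, hdisj, ← and_assoc, ← ih (by simp) (List.nodup_cons.1 hnd).2]
      constructor
      · rintro ⟨hF, hroot⟩
        have hR : ¬ F.Reachable a b := fun h => hab (hroot.2 a (by simp) b (by simp) h)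
        exact ⟨⟨hF.sup_edge_of_not_reachable hR, (rooted_sup_edge F ha hR).1 hroot⟩,
          fun h => hR h.reachable⟩
      · rintro ⟨⟨hF, hroot⟩, hadj⟩
        obtain ⟨hF', hreach⟩ := isAcyclic_sup_fromEdgeSet_iff.1 hF
        have hR : ¬ F.Reachable a b := fun h => (hreach h).elim hab hadj
        exact ⟨hF', (rooted_sup_edge F ha hR).2 hroot⟩

lemma isChain_of_spineEdges_subset {G : SimpleGraph V} (ω : List V) (hnd : ω.Nodup)
    (h : fromEdgeSet (spineEdges ω) ≤ G) : ω.IsChain G.Adj := by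
  induction ω with
  | nil => exact .nil
  | cons a l ih =>
    cases l with
    | nil => exact .singleton a
    | cons b l =>
      have hab : a ≠ b := fun h => (List.nodup_cons.1 hnd).1 (by simp [h])
      rw [spineEdges_cons_cons] at h
      exact .cons_cons (h ((fromEdgeSet_adj _).2 ⟨Set.mem_insert _ _, hab⟩))
        (ih (List.nodup_cons.1 hnd).2
          ((fromEdgeSet_mono (Set.subset_insert _ _)).trans h))

lemma deleteEdges_sup_path {T : SimpleGraph V} {u v : V} (p : T.Walk u v) :
    T.deleteEdges {e | e ∈ p.edges} ⊔ fromEdgeSet (spineEdges p.support) = T := by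
  rw [spineEdges_support]
  ext x y
  simp only [sup_adj, deleteEdges_adj, fromEdgeSet_adj, Set.mem_ofPred_eq]
  constructor
  · rintro (h | h)
    exacts [h.1, p.adj_of_mem_edges h.1]
  · intro h
    by_cases hp : s(x, y) ∈ p.edges
    exacts [Or.inr ⟨hp, h.ne⟩, Or.inl ⟨h, hp⟩]

lemma rooted_of_tree {T : SimpleGraph V} (hT : T.IsTree) {u v : V} (p : T.Walk u v)
    (hp : p.IsPath) :
    (T.deleteEdges {e | e ∈ p.edges}).IsAcyclic ∧
      Rooted (T.deleteEdges {e | e ∈ p.edges}) p.support := by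
  rw [forest_iff_tree _ p.support_ne_nil hp.support_nodup, deleteEdges_sup_path]
  refine ⟨hT, fun e he => ?_⟩
  rw [spineEdges_support] at he
  simp [edgeSet_deleteEdges, show e ∈ p.edges from he]

/-- Gluing the spine `ω` to a forest rooted at `ω` gives a tree in which `ω` supports a path, and
removing the edges of that path recovers the forest. -/
lemma exists_tree (ω : List V) (F : SimpleGraph V) (h1 : ω ≠ []) (h2 : ω.Nodup)
    (h3 : F.IsAcyclic) (h4 : Rooted F ω) :
    (F ⊔ fromEdgeSet (spineEdges ω)).IsTree ∧
      ∃ p : (F ⊔ fromEdgeSet (spineEdges ω)).Walk (ω.head h1) (ω.getLast h1),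
        p.IsPath ∧ p.support = ω ∧
          (F ⊔ fromEdgeSet (spineEdges ω)).deleteEdges {e | e ∈ p.edges} = F := by
  obtain ⟨hT, hd⟩ := (forest_iff_tree ω h1 h2 F).1 ⟨h3, h4⟩
  have hc := isChain_of_spineEdges_subset (G := F ⊔ fromEdgeSet (spineEdges ω)) ω h2 le_sup_right
  have hs := Walk.support_ofSupport h1 hc
  refine ⟨hT, Walk.ofSupport ω h1 hc, Walk.IsPath.mk' (by rwa [hs]), hs, ?_⟩
  rw [← spineEdges_support, hs]
  ext x y
  simp only [sup_adj, deleteEdges_adj, fromEdgeSet_adj]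
  constructor
  · rintro ⟨h | h, h'⟩
    exacts [h, absurd h.1 h']
  · exact fun h => ⟨Or.inl h, fun h' => hd _ h' h⟩

/-- The path of the tree `T` from `u` to `v`. -/
noncomputable def treePath {T : SimpleGraph V} (hT : T.IsTree) (u v : V) : T.Walk u v :=
  (hT.existsUnique_path u v).choose

lemma treePath_isPath {T : SimpleGraph V} (hT : T.IsTree) (u v : V) : (treePath hT u v).IsPath :=
  (hT.existsUnique_path u v).choose_spec.1

lemma eq_treePath {T : SimpleGraph V} (hT : T.IsTree) {u v : V} {p : T.Walk u v} (hp : p.IsPath) :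
    p = treePath hT u v :=
  (hT.existsUnique_path u v).unique hp (treePath_isPath hT u v)

/-- The forward map: a marked tree is sent to the support of its marked path and the graph left
after cutting that path. -/
noncomputable def cut (x : {T : SimpleGraph V // T.IsTree} × V × V) :
    {x : List V × SimpleGraph V //
      x.1 ≠ [] ∧ x.1.Nodup ∧ x.2.IsAcyclic ∧
      ∀ c : x.2.ConnectedComponent, ∃! v : V, v ∈ x.1 ∧ x.2.connectedComponentMk v = c} :=
  let p := treePath x.1.2 x.2.1 x.2.2
  have hp := treePath_isPath x.1.2 x.2.1 x.2.2
  have h := rooted_of_tree x.1.2 p hp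
  ⟨(p.support, x.1.1.deleteEdges {e' : Sym2 V | e' ∈ p.edges}),
    p.support_ne_nil, hp.support_nodup, h.1, (rooted_iff _ _).1 h.2⟩

lemma cut_eq {T : SimpleGraph V} (hT : T.IsTree) {u v : V} {p : T.Walk u v} (hp : p.IsPath) :
    (cut (⟨T, hT⟩, u, v) : List V × SimpleGraph V) =
      (p.support, T.deleteEdges {e' : Sym2 V | e' ∈ p.edges}) := by
  rw [eq_treePath hT hp]; rfl

/-- The tree is recovered by gluing, and the marks are the endpoints of the spine. -/
lemma cut_injective : Function.Injective (cut (V := V)) := by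
  rintro ⟨⟨T, hT⟩, u, v⟩ ⟨⟨T', hT'⟩, u', v'⟩ h
  have hp := treePath_isPath hT u v
  have hp' := treePath_isPath hT' u' v'
  have h := congrArg Subtype.val h
  rw [cut_eq hT hp, cut_eq hT' hp', Prod.mk.injEq] at h
  obtain ⟨hs, hF⟩ := h
  have hTT : T = T' := by
    rw [← deleteEdges_sup_path (treePath hT u v), hs, hF, deleteEdges_sup_path]
  have hu : u = u' := by
    rw [← (treePath hT u v).head_support, ← (treePath hT' u' v').head_support]
    simp only [hs]
  have hv : v = v' := by
    rw [← (treePath hT u v).getLast_support, ← (treePath hT' u' v').getLast_support]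
    simp only [hs]
  subst hTT hu hv
  rfl

lemma cut_glue (ω : List V) (F : SimpleGraph V) (h1 : ω ≠ []) (h2 : ω.Nodup)
    (h3 : F.IsAcyclic)
    (h4 : ∀ c : F.ConnectedComponent, ∃! v : V, v ∈ ω ∧ F.connectedComponentMk v = c) :
    cut (⟨F ⊔ fromEdgeSet (spineEdges ω),
        (exists_tree ω F h1 h2 h3 ((rooted_iff F ω).2 h4)).1⟩, ω.head h1, ω.getLast h1) =
      ⟨(ω, F), h1, h2, h3, h4⟩ := by
  obtain ⟨hT, p, hp, hs, hd⟩ := exists_tree ω F h1 h2 h3 ((rooted_iff F ω).2 h4)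
  apply Subtype.ext
  rw [cut_eq hT hp, hs, hd]

end SpineForest


/-- **Bijection between marked trees and spine–forest pairs**: pairs of a tree
on `V` with an ordered pair of marked vertices `(u, v)` are in bijection with
pairs of a nonempty duplicate-free list `ω` of vertices together with a forest
rooted at the vertices of `ω`; the bijection sends `(T, (u, v))` to the support
of the unique path from `u` to `v` together with the graph obtained by deleting
the edges of that path, and its inverse glues the spine edges along `ω` back to
the forest, marking the endpoints of `ω`. -/
theorem marked_tree_spine_forest_bijection
    (V : Type*) [Fintype V] [Nonempty V] :
    ∃ e : ({T : SimpleGraph V // T.IsTree} × V × V) ≃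
        {x : List V × SimpleGraph V //
          x.1 ≠ [] ∧ x.1.Nodup ∧ x.2.IsAcyclic ∧
          ∀ c : x.2.ConnectedComponent,
            ∃! v : V, v ∈ x.1 ∧ x.2.connectedComponentMk v = c},
      (∀ (T : SimpleGraph V) (hT : T.IsTree) (u v : V)
          (p : T.Walk u v), p.IsPath →
        ((e (⟨T, hT⟩, u, v)) : List V × SimpleGraph V)
          = (p.support, T.deleteEdges {e' : Sym2 V | e' ∈ p.edges})) ∧
      (∀ (ω : List V) (F : SimpleGraph V)
          (h1 : ω ≠ []) (h2 : ω.Nodup) (h3 : F.IsAcyclic)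
          (h4 : ∀ c : F.ConnectedComponent,
            ∃! v : V, v ∈ ω ∧ F.connectedComponentMk v = c),
        ((e.symm ⟨(ω, F), h1, h2, h3, h4⟩).1 : SimpleGraph V)
            = F ⊔ SimpleGraph.fromEdgeSet
                {e' : Sym2 V | e' ∈ (ω.zip ω.tail).map (fun q => s(q.1, q.2))}
          ∧ (e.symm ⟨(ω, F), h1, h2, h3, h4⟩).2 = (ω.head h1, ω.getLast h1)) := by
  have hsurj : Function.Surjective (SpineForest.cut (V := V)) := by
    rintro ⟨⟨ω, F⟩, h1, h2, h3, h4⟩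
    exact ⟨_, SpineForest.cut_glue ω F h1 h2 h3 h4⟩
  refine ⟨Equiv.ofBijective SpineForest.cut ⟨SpineForest.cut_injective, hsurj⟩,
    fun T hT u v p hp => SpineForest.cut_eq hT hp, fun ω F h1 h2 h3 h4 => ?_⟩
  have h := (Equiv.symm_apply_eq
    (Equiv.ofBijective SpineForest.cut ⟨SpineForest.cut_injective, hsurj⟩)).2
    (SpineForest.cut_glue ω F h1 h2 h3 h4).symm
  rw [h]
  exact ⟨rfl, rfl⟩
end
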